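/- arXiv:0906.3728 — 2 statements merged into one kernel-verified Lean document; each statement's English description precedes it below -/
import Mathlib

section
/- Let x be a root of F(X,u) in an extension of K(u), so that K(u)(x)/K(u) is a field extension of degree ℓ. The discriminant of the power basis 1, x, x², …, x^{ℓ−1} of K(u)(x) over K(u) (equivalently, the discriminant of the degree-ℓ polynomial F(X,u)) equals ℓ^ℓ · (4 − ω²)^{(ℓ−1)(ℓ−2)/2} · (u² − ωu + 1)^{ℓ−1}. -/
set_option synthInstance.maxHeartbeats 1000000
set_option maxHeartbeats 1000000

open Polynomial

/-!
The members of Rikuna's pencil at `u = ζ` and `u = ζ⁻¹` are the pure powers `(X - ζ) ^ ℓ` and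
`(X - ζ⁻¹) ^ ℓ`, so `F(X, u)` is a diagonal form `a (X - ζ) ^ ℓ + b (X - ζ⁻¹) ^ ℓ` whose
coefficients are linear in `u`, with `a + b = 1` and
`-(ζ - ζ⁻¹) ^ 2 * a * b = u ^ 2 - ω * u + 1`. The derivative of a diagonal form of degree `n + 1`
is `n + 1` times the form of degree `n` with the same coefficients, and one step of the Euclidean
algorithm reduces the resultant of the two to that of a pure power. Since `P` and `Q` are coprime,
`F(X, u)`, which is linear in `u`, is irreducible, so by Gauss's lemma it is the minimal polynomial
of `x` over `K(u)`.
-/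

section DiagonalForm

variable {R : Type*} [CommRing R]

/-- The diagonal binary form `a Sⁿ + b Tⁿ`, dehomogenised along the line `S = X - z`, `T = X - w`.
Rikuna's polynomial `F(X, u)` has this shape. -/
noncomputable def diagonalForm (a b z w : R) (n : ℕ) : R[X] :=
  C a * (X - C z) ^ n + C b * (X - C w) ^ n

variable (a b z w : R) (n : ℕ)

theorem natDegree_diagonalForm_le : (diagonalForm a b z w n).natDegree ≤ n := by
  have natDegree_term_le (c y : R) : (C c * (X - C y) ^ n).natDegree ≤ n :=
    natDegree_C_mul_le _ _ |>.trans <|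
      natDegree_pow_le_of_le n (natDegree_X_sub_C_le y) |>.trans (mul_one n).le
  exact natDegree_add_le_of_degree_le (natDegree_term_le a z) (natDegree_term_le b w)

theorem coeff_diagonalForm_self : (diagonalForm a b z w n).coeff n = a + b := by
  have coeff_pow_self (y : R) : ((X - C y) ^ n).coeff n = 1 := by
    simpa using coeff_pow_of_natDegree_le (m := n) (natDegree_X_sub_C_le y)
  simp [diagonalForm, coeff_pow_self]

-- The outer power absorbs the case `n = 0`, in which `(X - z) ^ n` does not vanish at `z`.
theorem eval_diagonalForm_pow_self :
    (diagonalForm a b z w n).eval z ^ n = (b * (z - w) ^ n) ^ n := by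
  obtain rfl | hn := eq_or_ne n 0 <;> simp [diagonalForm, *]

theorem derivative_diagonalForm_succ :
    derivative (diagonalForm a b z w (n + 1)) = C (n + 1 : R) * diagonalForm a b z w n := by
  simp only [diagonalForm, derivative_add, derivative_C_mul, derivative_X_sub_C_pow,
    Nat.add_sub_cancel, Nat.cast_add, Nat.cast_one]
  ring

theorem diagonalForm_succ :
    diagonalForm a b z w (n + 1) =
      C (a * (w - z)) * (X - C z) ^ n + diagonalForm a b z w n * (X - C w) := by
  simp only [diagonalForm, C_mul, C_sub]
  ring

theorem resultant_diagonalForm_succ :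
    resultant (diagonalForm a b z w (n + 1)) (diagonalForm a b z w n) (n + 1) n =
      (a + b) * (a * b) ^ n * (z - w) ^ (n * (n + 1)) := by
  nontriviality R
  have natDegree_le : (C (a * (w - z)) * (X - C z) ^ n).natDegree ≤ n :=
    (natDegree_C_mul_le _ _).trans_eq (by simp [(monic_X_sub_C z).natDegree_pow])
  have sign : (w - z) ^ n = (-1) ^ n * (z - w) ^ n := by rw [← mul_pow]; ring
  have sign_sq : ((-1 : R) ^ n) ^ 2 = 1 := by rw [← pow_mul, mul_comm, pow_mul]; simp
  -- Modulo the form of degree `n`, the one of degree `n + 1` is a multiple of `(X - z) ^ n`.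
  calc _ = resultant (C (a * (w - z)) * (X - C z) ^ n) (diagonalForm a b z w n) (n + 1) n := by
        rw [diagonalForm_succ, resultant_add_mul_left _ _ _ _ _
          (by rw [natDegree_X_sub_C, add_comm]) (natDegree_diagonalForm_le ..)]
    _ = (-1) ^ n * (a + b) * ((a * (w - z)) ^ n * (b * (z - w) ^ n) ^ n) := by
        rw [resultant_succ_left_deg _ _ _ _ natDegree_le, coeff_diagonalForm_self,
          resultant_C_mul_left, resultant_X_sub_C_pow_left _ _ _ _ (natDegree_diagonalForm_le ..),
          eval_diagonalForm_pow_self]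
    _ = ((-1) ^ n) ^ 2 * ((a + b) * (a * b) ^ n * (z - w) ^ (n * (n + 1))) := by
        rw [mul_pow a, sign]
        ring
    _ = _ := by rw [sign_sq, one_mul]

theorem resultant_derivative_diagonalForm_succ :
    resultant (diagonalForm a b z w (n + 1)) (derivative (diagonalForm a b z w (n + 1))) (n + 1) n =
      (n + 1) ^ (n + 1) * ((a + b) * (a * b) ^ n * (z - w) ^ (n * (n + 1))) := by
  rw [derivative_diagonalForm_succ, resultant_C_mul_right, resultant_diagonalForm_succ]

variable {a b}

theorem natDegree_diagonalForm (hab : a + b ≠ 0) : (diagonalForm a b z w n).natDegree = n :=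
  natDegree_eq_of_le_of_coeff_ne_zero (natDegree_diagonalForm_le ..)
    (by rwa [coeff_diagonalForm_self])

theorem monic_diagonalForm (hab : a + b = 1) : (diagonalForm a b z w n).Monic :=
  monic_of_natDegree_le_of_coeff_eq_one n (natDegree_diagonalForm_le ..)
    (by rw [coeff_diagonalForm_self, hab])

open scoped nonZeroDivisors in
theorem discr_diagonalForm (hab : a + b ∈ R⁰) :
    (diagonalForm a b z w n).discr =
      n ^ n * (a * b) ^ (n - 1) * (-(z - w) ^ 2) ^ (n * (n - 1) / 2) := by
  nontriviality R
  have hdeg := natDegree_diagonalForm z w n (nonZeroDivisors.ne_zero hab)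
  obtain _ | n := n
  · rw [eq_C_of_natDegree_eq_zero hdeg, discr_C]
    simp
  have hres := resultant_deriv (natDegree_pos_iff_degree_pos.mp (n.succ_pos.trans_eq hdeg.symm))
  rw [leadingCoeff, hdeg, Nat.add_sub_cancel, coeff_diagonalForm_self,
    resultant_derivative_diagonalForm_succ] at hres
  have half_mul_two : (n + 1) * n / 2 * 2 = n * (n + 1) := by
    rw [mul_comm (n + 1), Nat.div_mul_cancel (Nat.even_mul_succ_self n).two_dvd]
  have sign_sq : ((-1 : R) ^ ((n + 1) * n / 2)) ^ 2 = 1 := by rw [← pow_mul, pow_mul']; simp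
  rw [Nat.add_sub_cancel, neg_pow, ← pow_mul, mul_comm 2, half_mul_two,
    ← mul_cancel_left_mem_nonZeroDivisors hab]
  push_cast
  linear_combination -(a + b) * (diagonalForm a b z w (n + 1)).discr * sign_sq -
    (-1) ^ ((n + 1) * n / 2) * hres

end DiagonalForm

section PolynomialDiscriminant

theorem discr_map_of_monic {R S : Type*} [CommRing R] [CommRing S] {f : R[X]} (hf : f.Monic)
    (φ : R →+* S) : (f.map φ).discr = φ f.discr := by
  nontriviality S
  have := φ.domain_nontrivial
  obtain rfl | hf1 := eq_or_ne f 1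
  · rw [Polynomial.map_one, ← C_1, discr_C, ← C_1, discr_C, map_one]
  have hres := resultant_deriv (hf.degree_pos.mpr hf1)
  have hresφ := resultant_deriv ((hf.map φ).degree_pos.mpr (by
    rwa [Ne, ← (hf.map φ).natDegree_eq_zero, hf.natDegree_map, hf.natDegree_eq_zero]))
  rw [hf.natDegree_map, derivative_map, resultant_map_map, hres, map_mul, map_mul,
    hf.leadingCoeff, (hf.map φ).leadingCoeff] at hresφ
  rw [map_one, mul_one, mul_one, map_pow, map_neg, map_one] at hresφ
  exact (isUnit_one.neg.pow _).mul_left_cancel hresφ.symm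

end PolynomialDiscriminant

section PowerBasis

open Module

variable {K E : Type*} [Field K] [Field E] [Algebra K E]

theorem norm_aeval_gen_eq_resultant [Algebra.IsSeparable K E] (pb : PowerBasis K E) {g : K[X]}
    {m : ℕ} (hg : g.natDegree ≤ m) :
    Algebra.norm K (aeval pb.gen g) =
      resultant (minpoly K pb.gen) g (minpoly K pb.gen).natDegree m := by
  classical
  let M := AlgebraicClosure K
  have := pb.finite
  have hmonic := minpoly.monic pb.isIntegral_gen
  have hnodup : ((minpoly K pb.gen).aroots M).Nodup :=
    nodup_roots (Separable.map (Algebra.IsSeparable.isSeparable K pb.gen))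
  have hprod : ∏ σ : E →ₐ[K] M, aeval (σ pb.gen) g =
      (((minpoly K pb.gen).aroots M).map fun y => aeval y g).prod := by
    rw [Fintype.prod_equiv pb.liftEquiv' _ (fun y => aeval (y : M) g) (by simp),
      Finset.prod_mem_multiset _ _ (fun y => aeval y g) (fun _ => rfl),
      Finset.prod_eq_multiset_prod, Multiset.toFinset_val, hnodup.dedup]
  apply (algebraMap K M).injective
  calc algebraMap K M (Algebra.norm K (aeval pb.gen g))
      = ∏ σ : E →ₐ[K] M, aeval (σ pb.gen) g := by
        simp only [Algebra.norm_eq_prod_embeddings, aeval_algHom_apply]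
    _ = (((minpoly K pb.gen).aroots M).map fun y => aeval y g).prod := hprod
    _ = resultant ((minpoly K pb.gen).map (algebraMap K M)) (g.map (algebraMap K M))
          (minpoly K pb.gen).natDegree m := by
        rw [← natDegree_map (algebraMap K M), resultant_eq_prod_eval _ _ _
          (by rwa [natDegree_map]) (IsAlgClosed.splits _), (hmonic.map _).leadingCoeff, one_pow,
          one_mul]
        simp only [eval_map_algebraMap]
    _ = _ := resultant_map_map ..

theorem isSeparable_of_isSeparable_gen (pb : PowerBasis K E) (hgen : IsSeparable K pb.gen) :
    Algebra.IsSeparable K E := by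
  have := pb.finite
  have htop : IntermediateField.adjoin K {pb.gen} = ⊤ :=
    (Field.primitive_element_iff_minpoly_natDegree_eq K pb.gen).mpr
      (pb.natDegree_minpoly.trans pb.finrank.symm)
  have hadjoin := (IntermediateField.isSeparable_adjoin_simple_iff_isSeparable K E).mpr hgen
  rw [htop] at hadjoin
  exact .of_algHom K _ IntermediateField.topEquiv.symm.toAlgHom

theorem discr_eq_zero_of_not_isSeparable {ι : Type*} [Fintype ι] [DecidableEq ι] [Nonempty ι]
    (b : ι → E) (hsep : ¬ Algebra.IsSeparable K E) : Algebra.discr K b = 0 := by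
  have htrace : Algebra.traceMatrix K b = 0 := by
    ext i j
    simp [Algebra.traceMatrix_apply, Algebra.traceForm_apply,
      Algebra.trace_eq_zero_of_not_isSeparable hsep]
  rw [Algebra.discr_def, htrace, Matrix.det_zero]

theorem discr_powerBasis_eq_discr_minpoly (pb : PowerBasis K E) :
    Algebra.discr K pb.basis = (minpoly K pb.gen).discr := by
  have := pb.finite
  have hres := resultant_deriv (minpoly.degree_pos pb.isIntegral_gen)
  rw [(minpoly.monic pb.isIntegral_gen).leadingCoeff, mul_one] at hres
  by_cases hsep : Algebra.IsSeparable K E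
  · rw [Algebra.discr_powerBasis_eq_norm,
      norm_aeval_gen_eq_resultant pb (natDegree_derivative_le _), hres, pb.finrank,
      pb.natDegree_minpoly, ← mul_assoc, ← mul_pow]
    simp
  · -- The derivative of the minimal polynomial and the trace form both vanish.
    have hderiv : derivative (minpoly K pb.gen) = 0 := by
      by_contra hne
      exact hsep <| isSeparable_of_isSeparable_gen pb <|
        (separable_iff_derivative_ne_zero (minpoly.irreducible pb.isIntegral_gen)).mpr hne
    have : Nonempty (Fin pb.dim) := Fin.pos_iff_nonempty.mp pb.dim_pos
    rw [hderiv, resultant_zero_right, zero_pow (minpoly.natDegree_pos pb.isIntegral_gen).ne',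
      zero_mul] at hres
    rw [discr_eq_zero_of_not_isSeparable pb.basis hsep]
    exact ((isUnit_one.neg.pow _).mul_right_eq_zero.mp hres.symm).symm

theorem discr_pow_eq_discr_minpoly [FiniteDimensional K E] {x : E} {n : ℕ}
    (hn : finrank K E = n) (hx : (minpoly K x).natDegree = n) :
    Algebra.discr K (fun i : Fin n => x ^ (i : ℕ)) = (minpoly K x).discr := by
  subst hx
  let b := basisOfLinearIndependentOfCardEqFinrank' _ (linearIndependent_pow (K := K) x)
    (by simp [hn])
  let pb : PowerBasis K E := ⟨x, _, b, fun i => by simp [b]⟩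
  rw [← discr_powerBasis_eq_discr_minpoly pb]
  congr 1
  ext i
  simp [pb, b]

end PowerBasis

section Pencil

/-- The generic member `P - u Q` of the pencil spanned by `P` and `Q`, the parameter `u` being the
variable of the coefficient ring `R[X]`. -/
noncomputable def genericPencil {R : Type*} [CommRing R] (P Q : R[X]) : R[X][X] :=
  P.map C - C X * Q.map C

theorem map_genericPencil {R S : Type*} [CommRing R] [CommRing S] (φ : R →+* S) (P Q : R[X]) :
    (genericPencil P Q).map (mapRingHom φ) = genericPencil (P.map φ) (Q.map φ) := by
  have hcomp : (mapRingHom φ).comp C = (C : S →+* S[X]).comp φ := by ext; simp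
  simp [genericPencil, map_map, hcomp]

theorem irreducible_genericPencil {R : Type*} [CommRing R] [IsDomain R] {P Q : R[X]} (hQ : Q ≠ 0)
    (hPQ : IsRelPrime P Q) : Irreducible (genericPencil P Q) := by
  -- The pencil is linear in its parameter.
  have hswap : Bivariate.swap (genericPencil P Q) = C (-Q) * X + C P := by
    rw [genericPencil, map_sub, map_mul, Bivariate.swap_X, Bivariate.swap_map_C,
      Bivariate.swap_map_C, C_neg]
    ring
  rw [← MulEquiv.irreducible_iff (Bivariate.swap (R := R)), hswap]
  exact irreducible_C_mul_X_add_C (neg_ne_zero.mpr hQ) hPQ.symm.neg_left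

theorem map_algebraMap_genericPencil {K : Type*} [Field K] (P Q : K[X]) :
    (genericPencil P Q).map (algebraMap K[X] (RatFunc K)) =
      P.map (algebraMap K (RatFunc K)) - C RatFunc.X * Q.map (algebraMap K (RatFunc K)) := by
  have hcomp : (algebraMap K[X] (RatFunc K)).comp C = algebraMap K (RatFunc K) := by ext; simp
  simp [genericPencil, map_map, hcomp]

end Pencil

section RikunaPencil

/-- The polynomials `P` and `Q` span Rikuna's pencil of degree `n` with base parameters `z ≠ w`:
the members of the pencil `P - u Q` at `u = z` and `u = w`, which may lie in an extension `L` of the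
field `K` of coefficients, are the pure powers `(X - z) ^ n` and `(X - w) ^ n`. -/
structure IsRikunaPencil {K L : Type*} [Field K] [Field L] [Algebra K L] (n : ℕ) (z w : L)
    (P Q : K[X]) : Prop where
  ne : z ≠ w
  sub_left : P.map (algebraMap K L) - C z * Q.map (algebraMap K L) = (X - C z) ^ n
  sub_right : P.map (algebraMap K L) - C w * Q.map (algebraMap K L) = (X - C w) ^ n

variable {K L : Type*} [Field K] [Field L] [Algebra K L] {n : ℕ} {z w : L} {P Q : K[X]}

theorem C_inv_sub_mul_C_sub (hzw : z ≠ w) : C (w - z)⁻¹ * (C w - C z) = 1 := by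
  rw [← C_sub, ← C_mul, inv_mul_cancel₀ (sub_ne_zero.mpr hzw.symm), C_1]

theorem C_inv_sub_mul_add_C_inv_sub_mul (hzw : z ≠ w) :
    (C (w - z)⁻¹ * (C w - X) + C (w - z)⁻¹ * (X - C z) : L[X]) = 1 := by
  rw [← mul_add, sub_add_sub_cancel, C_inv_sub_mul_C_sub hzw]

namespace IsRikunaPencil

theorem of_map_eq (hzw : z ≠ w)
    (hP : P.map (algebraMap K L) = C (w - z)⁻¹ * (C w * (X - C z) ^ n - C z * (X - C w) ^ n))
    (hQ : Q.map (algebraMap K L) = C (w - z)⁻¹ * ((X - C z) ^ n - (X - C w) ^ n)) :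
    IsRikunaPencil n z w P Q where
  ne := hzw
  sub_left := by
    rw [hP, hQ]
    linear_combination (X - C z) ^ n * C_inv_sub_mul_C_sub hzw
  sub_right := by
    rw [hP, hQ]
    linear_combination (X - C w) ^ n * C_inv_sub_mul_C_sub hzw

variable (h : IsRikunaPencil n z w P Q)
include h

theorem isCoprime : IsCoprime P Q := by
  have hpow : IsCoprime ((X - C z) ^ n) ((X - C w) ^ n) :=
    (isCoprime_X_sub_C_of_isUnit_sub (sub_ne_zero.mpr h.ne).isUnit).pow
  rw [← h.sub_left, ← h.sub_right] at hpow
  obtain ⟨a, b, hab⟩ := hpow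
  rw [← isCoprime_map (algebraMap K L)]
  exact ⟨a + b, -(a * C z + b * C w), by linear_combination hab⟩

theorem right_ne_zero (hn : n ≠ 0) : Q ≠ 0 := by
  rintro rfl
  have hpow : (X - C z) ^ n = (X - C w) ^ n := by
    rw [← h.sub_left, ← h.sub_right, Polynomial.map_zero, mul_zero, mul_zero]
  have heval : 0 = (z - w) ^ n := by simpa [hn] using congrArg (eval z) hpow
  exact pow_ne_zero n (sub_ne_zero.mpr h.ne) heval.symm

theorem irreducible_genericPencil (hn : n ≠ 0) : Irreducible (genericPencil P Q) :=
  _root_.irreducible_genericPencil (h.right_ne_zero hn) h.isCoprime.isRelPrime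

theorem map_genericPencil_eq_diagonalForm :
    (genericPencil P Q).map (mapRingHom (algebraMap K L)) =
      diagonalForm (C (w - z)⁻¹ * (C w - X)) (C (w - z)⁻¹ * (X - C z)) (C z) (C w) n := by
  have hinv := congrArg C (C_inv_sub_mul_C_sub h.ne)
  have hz := congrArg (map C) h.sub_left
  have hw := congrArg (map C) h.sub_right
  simp only [C_mul, C_sub, C_1] at hinv
  simp only [Polynomial.map_sub, Polynomial.map_mul, Polynomial.map_pow, map_X, map_C] at hz hw
  rw [map_genericPencil]
  simp only [diagonalForm, genericPencil, C_mul, C_sub, ← hz, ← hw]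
  linear_combination
    (C X * map C (Q.map (algebraMap K L)) - map C (P.map (algebraMap K L))) * hinv

theorem monic_genericPencil : (genericPencil P Q).Monic := by
  refine monic_of_injective (f := mapRingHom (algebraMap K L))
    (map_injective _ (algebraMap K L).injective) ?_
  rw [h.map_genericPencil_eq_diagonalForm]
  exact monic_diagonalForm _ _ _ (C_inv_sub_mul_add_C_inv_sub_mul h.ne)

theorem natDegree_genericPencil : (genericPencil P Q).natDegree = n := by
  rw [← natDegree_map_eq_of_injective (f := mapRingHom (algebraMap K L))
    (map_injective _ (algebraMap K L).injective), h.map_genericPencil_eq_diagonalForm]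
  exact natDegree_diagonalForm _ _ _ ((C_inv_sub_mul_add_C_inv_sub_mul h.ne).trans_ne one_ne_zero)

theorem discr_genericPencil (hn : n ≠ 0) {s p : K} (hs : algebraMap K L s = z + w)
    (hp : algebraMap K L p = z * w) :
    (genericPencil P Q).discr =
      (n : K[X]) ^ n * (4 * C p - C s ^ 2) ^ ((n - 1) * (n - 2) / 2) *
        (X ^ 2 - C s * X + C p) ^ (n - 1) := by
  have hcoeff : C (w - z)⁻¹ * (C w - X) * (C (w - z)⁻¹ * (X - C z)) * -(C z - C w) ^ 2 =
      (X ^ 2 - C s * X + C p).map (algebraMap K L) := by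
    simp only [Polynomial.map_add, Polynomial.map_sub, Polynomial.map_mul, Polynomial.map_pow,
      map_X, map_C, hs, hp, C_add, C_mul]
    linear_combination (C w - X) * (C z - X) * (C (w - z)⁻¹ * (C w - C z) + 1) *
      C_inv_sub_mul_C_sub h.ne
  have hsq : -(C z - C w) ^ 2 = (4 * C p - C s ^ 2 : K[X]).map (algebraMap K L) := by
    simp only [Polynomial.map_sub, Polynomial.map_mul, Polynomial.map_pow, map_C, hs, hp, C_add,
      C_mul, Polynomial.map_ofNat]
    ring
  have hexp : n * (n - 1) / 2 = (n - 1) * (n - 2) / 2 + (n - 1) := by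
    obtain ⟨m, rfl⟩ := Nat.exists_eq_succ_of_ne_zero hn
    exact Nat.triangle_succ m
  apply map_injective _ (algebraMap K L).injective
  rw [← coe_mapRingHom, ← discr_map_of_monic h.monic_genericPencil,
    h.map_genericPencil_eq_diagonalForm,
    discr_diagonalForm _ _ _ (C_inv_sub_mul_add_C_inv_sub_mul h.ne ▸ one_mem _),
    map_mul, map_mul, map_pow, map_pow, map_pow, map_natCast, coe_mapRingHom, ← hsq, ← hcoeff, hexp,
    pow_add, mul_pow _ (-(C z - C w) ^ 2)]
  ring

theorem minpoly_eq (hn : n ≠ 0) {E : Type*} [Field E] [Algebra (RatFunc K) E] {x : E}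
    (hx : aeval x (P.map (algebraMap K (RatFunc K)) -
      C RatFunc.X * Q.map (algebraMap K (RatFunc K))) = 0) :
    minpoly (RatFunc K) x = (genericPencil P Q).map (algebraMap K[X] (RatFunc K)) := by
  rw [← map_algebraMap_genericPencil] at hx
  have hirr := h.monic_genericPencil.irreducible_iff_irreducible_map_fraction_map (K := RatFunc K)
  exact (minpoly.eq_of_irreducible_of_monic (hirr.mp (h.irreducible_genericPencil hn)) hx
    (h.monic_genericPencil.map _)).symm

end IsRikunaPencil

end RikunaPencil

theorem ne_inv_of_isPrimitiveRoot {G : Type*} [CommGroupWithZero G] {ζ : G} {n : ℕ}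
    (hζ : IsPrimitiveRoot ζ n) (hn : 2 < n) : ζ ≠ ζ⁻¹ := by
  intro hinv
  have hsq : ζ ^ 2 = 1 := by rwa [sq, mul_eq_one_iff_eq_inv₀ (hζ.ne_zero (by lia))]
  exact hn.not_ge (Nat.le_of_dvd two_pos (hζ.dvd_of_pow_eq_one 2 hsq))

theorem stmt_2_general {K L : Type*} [Field K] [Field L] [Algebra K L] {n : ℕ} (hn : n ≠ 0)
    {z w : L} (hzw : z ≠ w) {s p : K} (hs : algebraMap K L s = z + w)
    (hp : algebraMap K L p = z * w) {P Q : K[X]}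
    (hP : P.map (algebraMap K L) = C (w - z)⁻¹ * (C w * (X - C z) ^ n - C z * (X - C w) ^ n))
    (hQ : Q.map (algebraMap K L) = C (w - z)⁻¹ * ((X - C z) ^ n - (X - C w) ^ n))
    {E : Type*} [Field E] [Algebra (RatFunc K) E] (hdeg : Module.finrank (RatFunc K) E = n)
    {x : E} (hx : aeval x (P.map (algebraMap K (RatFunc K)) -
      C RatFunc.X * Q.map (algebraMap K (RatFunc K))) = 0) :
    Algebra.discr (RatFunc K) (fun i : Fin n => x ^ (i : ℕ)) =
      (n : RatFunc K) ^ n *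
        (4 * algebraMap K (RatFunc K) p - algebraMap K (RatFunc K) s ^ 2) ^
          ((n - 1) * (n - 2) / 2) *
        (RatFunc.X ^ 2 - algebraMap K (RatFunc K) s * RatFunc.X +
          algebraMap K (RatFunc K) p) ^ (n - 1) := by
  have hpencil : IsRikunaPencil n z w P Q := .of_map_eq hzw hP hQ
  have hmonic := hpencil.monic_genericPencil
  have hminpoly := hpencil.minpoly_eq hn hx
  have hnatDegree : (minpoly (RatFunc K) x).natDegree = n := by
    rw [hminpoly, hmonic.natDegree_map, hpencil.natDegree_genericPencil]
  have : FiniteDimensional (RatFunc K) E := Module.finite_of_finrank_pos (by lia)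
  rw [discr_pow_eq_discr_minpoly hdeg hnatDegree, hminpoly, discr_map_of_monic hmonic,
    hpencil.discr_genericPencil hn hs hp]
  simp [map_ofNat (algebraMap K[X] (RatFunc K)) 4]

/-- Let `x` be a root of Rikuna's polynomial `F(X,u) = 𝒫(X) - u 𝒬(X)` in an extension `E`
of `K(u)` of degree `ℓ` (so `E = K(u)(x)`).  The discriminant of the power basis
`1, x, …, x^(ℓ-1)` of `E` over `K(u)` (i.e. the discriminant of `F(X,u)`) equals
`ℓ^ℓ (4 - ω²)^((ℓ-1)(ℓ-2)/2) (u² - ωu + 1)^(ℓ-1)`, where `ω = ζ + ζ⁻¹ ∈ K`. -/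
theorem stmt_2 (ℓ : ℕ) (hℓ : ℓ.Prime) (hodd : Odd ℓ)
    (L : Type*) [Field L] (hchar : (ℓ : L) ≠ 0)
    (K : Subfield L) (ζ : L) (hζ : IsPrimitiveRoot ζ ℓ) (hζK : ζ ∉ K)
    (ω : K) (hω : (ω : L) = ζ + ζ⁻¹)
    (P Q : Polynomial K)
    (hP : P.map K.subtype =
      C (ζ⁻¹ - ζ)⁻¹ * (C ζ⁻¹ * (X - C ζ) ^ ℓ - C ζ * (X - C ζ⁻¹) ^ ℓ))
    (hQ : Q.map K.subtype =
      C (ζ⁻¹ - ζ)⁻¹ * ((X - C ζ) ^ ℓ - (X - C ζ⁻¹) ^ ℓ))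
    (E : Type*) [Field E] [Algebra (RatFunc K) E]
    (hdeg : Module.finrank (RatFunc K) E = ℓ) (x : E)
    (hx : Polynomial.aeval x (P.map (algebraMap K (RatFunc K)) -
      C RatFunc.X * Q.map (algebraMap K (RatFunc K))) = 0) :
    Algebra.discr (RatFunc K) (fun i : Fin ℓ => x ^ (i : ℕ)) =
      (ℓ : RatFunc K) ^ ℓ *
        (4 - algebraMap K (RatFunc K) ω ^ 2) ^ ((ℓ - 1) * (ℓ - 2) / 2) *
        (RatFunc.X ^ 2 - algebraMap K (RatFunc K) ω * RatFunc.X + 1) ^ (ℓ - 1) := by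
  have hζ_inv : ζ ≠ ζ⁻¹ := ne_inv_of_isPrimitiveRoot hζ (by grind [hℓ.two_le])
  simpa using stmt_2_general hℓ.ne_zero hζ_inv hω (p := 1) (by simp [hζ.ne_zero hℓ.ne_zero])
    hP hQ hdeg hx
end

section
/- Let q be an odd prime power and ℓ an odd prime not dividing q with q ≡ −1 (mod ℓ), let ζ be a primitive ℓ-th root of unity in the quadratic extension 𝔽_{q²} of 𝔽_q, and let ω = ζ + ζ^{-1} ∈ 𝔽_q. Let 𝒫, 𝒬 ∈ 𝔽_q[X] be the Rikuna polynomials and r = 𝒫/𝒬 the associated rational function, and define X₀ = T and X_j = r(X_{j−1}) ∈ 𝔽_q(T) for j ≥ 1. Let m > 1 be an integer and γ ∈ 𝔽_q such that X^m − (γ + ℓζ) is irreducible over 𝔽_{q²}. Then for every n ≥ 0 the polynomial Y^m − (ℓ·X_n + γ) is irreducible over the rational function field 𝔽_q(T). -/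
open Polynomial

/-! The point `ζ` is a fixed point of `r = 𝒫 / 𝒬` with `𝒬(ζ) ≠ 0`. Hence every `X_n` is regular
at `T = ζ` and takes the value `ζ` there, so that `Y ^ m - (ℓ X_n + γ)` has coefficients in the
local ring of `𝔽_q(T)` at `T = ζ` and reduces to `Y ^ m - (ℓ ζ + γ)`. That ring is integrally
closed, so by Gauss's lemma the irreducibility of the reduction passes to the fraction field. -/

section LocalRing

variable {k A E : Type*} (K : Type*) [CommRing k] [CommRing A] [Algebra k A] [Field E]
  [Algebra k E] [Field K] [Algebra A K] [IsFractionRing A K]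

instance (ψ : A →ₐ[k] E) : (RingHom.ker ψ).IsPrime :=
  RingHom.ker_isPrime ψ

/-- The local ring of the `E`-valued point `ψ` of `Spec A`: the localization of the domain `A` at
the prime ideal `ker ψ`, realized inside the fraction field `K` of `A`. -/
noncomputable def localRingAt [IsDomain A] (ψ : A →ₐ[k] E) : Subalgebra A K :=
  Localization.subalgebra.ofField K (RingHom.ker ψ).primeCompl
    (RingHom.ker ψ).primeCompl_le_nonZeroDivisors

variable [IsDomain A] (ψ : A →ₐ[k] E)

instance : IsLocalization (RingHom.ker ψ).primeCompl (localRingAt K ψ) :=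
  inferInstanceAs (IsLocalization _ (Localization.subalgebra.ofField K _ _))

instance : IsFractionRing (localRingAt K ψ) K :=
  inferInstanceAs (IsFractionRing (Localization.subalgebra.ofField K _ _) K)

instance [IsIntegrallyClosed A] : IsIntegrallyClosed (localRingAt K ψ) :=
  isIntegrallyClosed_of_isLocalization _ (RingHom.ker ψ).primeCompl
    (RingHom.ker ψ).primeCompl_le_nonZeroDivisors

variable [Algebra k K] [IsScalarTower k A K]

/-- The value at the point `ψ` of a function that is regular there: the extension of `ψ` to the
local ring. -/
noncomputable def localRingEval : localRingAt K ψ →ₐ[k] E :=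
  IsLocalization.liftAlgHom (M := (RingHom.ker ψ).primeCompl) (f := ψ)
    fun s => isUnit_iff_ne_zero.2 s.2

@[simp]
theorem localRingEval_algebraMap (a : A) :
    localRingEval K ψ (algebraMap A (localRingAt K ψ) a) = ψ a :=
  IsLocalization.lift_eq _ a

instance : IsLocalHom (localRingEval K ψ) where
  map_nonunit x hx := by
    obtain ⟨⟨a, s⟩, hxs⟩ := IsLocalization.surj (RingHom.ker ψ).primeCompl x
    have hψ : localRingEval K ψ x * ψ s = ψ a := by
      simpa only [map_mul, localRingEval_algebraMap] using congrArg (localRingEval K ψ) hxs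
    have ha : a ∈ (RingHom.ker ψ).primeCompl := fun ha =>
      mul_ne_zero hx.ne_zero s.2 (hψ.trans ha)
    have hunit := IsLocalization.map_units (localRingAt K ψ) ⟨a, ha⟩
    exact isUnit_of_mul_isUnit_left (hxs ▸ hunit)

variable {K}

/-- The element `z` of the function field `K` is regular at the point `ψ` and takes the value `e`
there. -/
def HasValueAt (z : K) (e : E) : Prop :=
  ∃ x : localRingAt K ψ, (x : K) = z ∧ localRingEval K ψ x = e

variable {ψ}

namespace HasValueAt

protected theorem algebraMap (a : A) : HasValueAt ψ (algebraMap A K a) (ψ a) :=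
  ⟨algebraMap A _ a, rfl, localRingEval_algebraMap K ψ a⟩

protected theorem aeval {z : K} {e : E} (h : HasValueAt ψ z e) (p : k[X]) :
    HasValueAt ψ (aeval z p) (aeval e p) := by
  obtain ⟨x, rfl, rfl⟩ := h
  exact ⟨Polynomial.aeval x p,
    (aeval_algHom_apply ((localRingAt K ψ).val.restrictScalars k) x p).symm,
    (aeval_algHom_apply (localRingEval K ψ) x p).symm⟩

theorem div {z w : K} {e f : E} (hz : HasValueAt ψ z e) (hw : HasValueAt ψ w f) (hf : f ≠ 0) :
    HasValueAt ψ (z / w) (e / f) := by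
  obtain ⟨x, rfl, rfl⟩ := hz
  obtain ⟨y, rfl, rfl⟩ := hw
  obtain ⟨u, rfl⟩ := isUnit_of_map_unit (localRingEval K ψ) y (isUnit_iff_ne_zero.2 hf)
  have hmul : x * ↑u⁻¹ * ↑u = x := u.inv_mul_cancel_right x
  have hu : ((u : localRingAt K ψ) : K) ≠ 0 := (u.isUnit.map (localRingAt K ψ).val).ne_zero
  refine ⟨x * ↑u⁻¹, eq_div_of_mul_eq hu ?_, eq_div_of_mul_eq hf ?_⟩
  · exact congrArg Subtype.val hmul
  · rw [← map_mul, hmul]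

theorem iterate {P Q : k[X]} {x : ℕ → K} {e : E} (h₀ : HasValueAt ψ (x 0) e)
    (hx : ∀ j, x (j + 1) = Polynomial.aeval (x j) P / Polynomial.aeval (x j) Q)
    (hQ : Polynomial.aeval e Q ≠ 0)
    (hfix : Polynomial.aeval e P / Polynomial.aeval e Q = e) (n : ℕ) :
    HasValueAt ψ (x n) e := by
  induction n with
  | zero => exact h₀
  | succ n ih => simpa only [hx, hfix] using (ih.aeval P).div (ih.aeval Q) hQ

theorem irreducible_map_aeval [IsIntegrallyClosed A] {z : K} {e : E} (h : HasValueAt ψ z e)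
    {g : k[X][X]} (hg : g.Monic) (hirr : Irreducible (g.map (Polynomial.aeval e).toRingHom)) :
    Irreducible (g.map (Polynomial.aeval z).toRingHom) := by
  obtain ⟨x, rfl, rfl⟩ := h
  let G : (localRingAt K ψ)[X] := g.map (Polynomial.aeval x).toRingHom
  have hG : G.Monic := hg.map _
  have hGE : G.map (localRingEval K ψ).toRingHom =
      g.map (Polynomial.aeval (localRingEval K ψ x)).toRingHom := by
    rw [Polynomial.map_map, aeval_algHom]
    rfl
  have hGK : G.map (algebraMap (localRingAt K ψ) K) =
      g.map (Polynomial.aeval (x : K)).toRingHom := by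
    rw [Polynomial.map_map]
    exact congrArg (fun φ : k[X] →ₐ[k] K => g.map φ.toRingHom)
      (aeval_algHom ((localRingAt K ψ).val.restrictScalars k) x).symm
  rw [← hGK, ← hG.irreducible_iff_irreducible_map_fraction_map]
  exact hG.irreducible_of_irreducible_map _ _ (hGE ▸ hirr)

end HasValueAt

end LocalRing

section Rikuna

variable {E : Type*} [Field E]

/-- The Rikuna polynomial `𝒫`, the numerator of `r`. -/
noncomputable def rikunaNum (ζ : E) (ℓ : ℕ) : E[X] :=
  C (ζ⁻¹ - ζ)⁻¹ * (C ζ⁻¹ * (X - C ζ) ^ ℓ - C ζ * (X - C ζ⁻¹) ^ ℓ)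

/-- The Rikuna polynomial `𝒬`, the denominator of `r`. -/
noncomputable def rikunaDen (ζ : E) (ℓ : ℕ) : E[X] :=
  C (ζ⁻¹ - ζ)⁻¹ * ((X - C ζ) ^ ℓ - (X - C ζ⁻¹) ^ ℓ)

variable {ζ : E} {ℓ : ℕ}

theorem eval_rikunaDen_ne_zero (hℓ : ℓ ≠ 0) (hζ : ζ⁻¹ ≠ ζ) : (rikunaDen ζ ℓ).eval ζ ≠ 0 := by
  have heval : (rikunaDen ζ ℓ).eval ζ = (ζ⁻¹ - ζ)⁻¹ * -(ζ - ζ⁻¹) ^ ℓ := by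
    simp [rikunaDen, hℓ]
  rw [heval]
  exact mul_ne_zero (inv_ne_zero (sub_ne_zero.2 hζ))
    (neg_ne_zero.2 (pow_ne_zero ℓ (sub_ne_zero.2 hζ.symm)))

theorem eval_rikunaNum (hℓ : ℓ ≠ 0) :
    (rikunaNum ζ ℓ).eval ζ = ζ * (rikunaDen ζ ℓ).eval ζ := by
  simp only [rikunaNum, rikunaDen, eval_mul, eval_C, eval_sub, eval_pow, eval_X, sub_self,
    zero_pow hℓ]
  ring

theorem inv_ne_self_of_isPrimitiveRoot (hζ : IsPrimitiveRoot ζ ℓ) (hℓ : 2 < ℓ) : ζ⁻¹ ≠ ζ := by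
  intro hinv
  refine hζ.pow_ne_one_of_pos_of_lt two_ne_zero hℓ ?_
  rw [sq]
  nth_rw 1 [← hinv]
  exact inv_mul_cancel₀ (hζ.ne_zero (by lia))

end Rikuna

theorem stmt_17_general {F E : Type*} [Field F] [Field E] [Algebra F E] {ℓ : ℕ} (hℓ : ℓ ≠ 0)
    {ζ : E} (hζ : ζ⁻¹ ≠ ζ) {P Q : F[X]} (hP : P.map (algebraMap F E) = rikunaNum ζ ℓ)
    (hQ : Q.map (algebraMap F E) = rikunaDen ζ ℓ) {Xs : ℕ → RatFunc F}
    (hX0 : Xs 0 = RatFunc.X) (hXs : ∀ j, Xs (j + 1) = aeval (Xs j) P / aeval (Xs j) Q)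
    {g : F[X][X]} (hg : g.Monic) (hirr : Irreducible (g.map (aeval ζ).toRingHom)) (n : ℕ) :
    Irreducible (g.map (aeval (Xs n)).toRingHom) := by
  have hden : aeval ζ Q ≠ 0 := by
    rw [← eval_map_algebraMap, hQ]
    exact eval_rikunaDen_ne_zero hℓ hζ
  have hfix : aeval ζ P / aeval ζ Q = ζ := by
    rw [div_eq_iff hden, ← eval_map_algebraMap, ← eval_map_algebraMap, hP, hQ]
    exact eval_rikunaNum hℓ
  have hstart : HasValueAt (aeval (R := F) ζ) (Xs 0) ζ := by
    simpa only [hX0, RatFunc.algebraMap_X, aeval_X] using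
      HasValueAt.algebraMap (K := RatFunc F) (ψ := aeval (R := F) ζ) X
  exact (hstart.iterate hXs hden hfix n).irreducible_map_aeval hg hirr

/-- Let `q` be an odd prime power, `ℓ` an odd prime with `ℓ ∤ q` and `q ≡ -1 (mod ℓ)`,
`ζ` a primitive `ℓ`-th root of unity in the quadratic extension `E = 𝔽_{q²}` of `F = 𝔽_q`,
and `ω = ζ + ζ⁻¹ ∈ 𝔽_q`.  Let `P, Q ∈ 𝔽_q[X]` be the Rikuna polynomials (their images in
`E[X]` are `𝒫(X) = (ζ⁻¹ - ζ)⁻¹ (ζ⁻¹(X - ζ)^ℓ - ζ(X - ζ⁻¹)^ℓ)` and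
`𝒬(X) = (ζ⁻¹ - ζ)⁻¹ ((X - ζ)^ℓ - (X - ζ⁻¹)^ℓ)`), and define `X₀ = T` and
`X_j = P(X_{j-1})/Q(X_{j-1}) ∈ 𝔽_q(T)`.  If `γ ∈ 𝔽_q` is such that `X^m - (γ + ℓζ)` is
irreducible over `𝔽_{q²}` (with `m > 1`), then for every `n ≥ 0` the polynomial
`Y^m - (ℓ X_n + γ)` is irreducible over `𝔽_q(T)`. -/
theorem stmt_17 (q ℓ : ℕ) (hqodd : Odd q) (hq : IsPrimePow q)
    (hℓ : ℓ.Prime) (hℓodd : Odd ℓ) (hℓq : ¬ ℓ ∣ q) (hcong : ℓ ∣ q + 1)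
    (F E : Type*) [Field F] [Field E] [Algebra F E] [Fintype F] [Fintype E]
    (hcardF : Fintype.card F = q) (hcardE : Fintype.card E = q ^ 2)
    (ζ : E) (hζ : IsPrimitiveRoot ζ ℓ)
    (ω : F) (hω : algebraMap F E ω = ζ + ζ⁻¹)
    (P Q : Polynomial F)
    (hP : P.map (algebraMap F E) =
      C (ζ⁻¹ - ζ)⁻¹ * (C ζ⁻¹ * (X - C ζ) ^ ℓ - C ζ * (X - C ζ⁻¹) ^ ℓ))
    (hQ : Q.map (algebraMap F E) =
      C (ζ⁻¹ - ζ)⁻¹ * ((X - C ζ) ^ ℓ - (X - C ζ⁻¹) ^ ℓ))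
    (Xs : ℕ → RatFunc F) (hX0 : Xs 0 = RatFunc.X)
    (hXs : ∀ j : ℕ, Xs (j + 1) = Polynomial.aeval (Xs j) P / Polynomial.aeval (Xs j) Q)
    (m : ℕ) (hm : 1 < m) (γ : F)
    (hirr : Irreducible (X ^ m - C (algebraMap F E γ + (ℓ : E) * ζ) : Polynomial E)) :
    ∀ n : ℕ, Irreducible (X ^ m -
      C ((ℓ : RatFunc F) * Xs n + algebraMap F (RatFunc F) γ) : Polynomial (RatFunc F)) := by
  have hζ' : ζ⁻¹ ≠ ζ := inv_ne_self_of_isPrimitiveRoot hζ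
    (hℓ.two_le.lt_of_ne' (hℓodd.ne_two_of_dvd_nat dvd_rfl))
  have hg : (X ^ m - C (C (ℓ : F) * X + C γ)).Monic := monic_X_pow_sub_C _ (by lia)
  intro n
  simpa using
    stmt_17_general hℓ.ne_zero hζ' hP hQ hX0 hXs hg (by simpa [add_comm] using hirr) n
end
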